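/- The partial sums of the Kontsevich-Zagier series satisfy: for all positive integers s, N and every residue i in {0,...,s-1} that is not congruent mod s to any pentagonal number m(3m+1)/2 with m ∈ ℤ, the q-factorial (q;q)_{⌊(N+1)/s⌋} divides the polynomial A_s(N,i,q), where F(q;N) = ∑_{n=0}^N (q;q)_n = ∑_{i=0}^{s-1} q^i A_s(N,i,q^s). -/

import Mathlib

open Polynomial Finset

/-- The q-Pochhammer symbol `(q;q)_n` as a polynomial over `ℤ`. -/
noncomputable def qPoch (n : ℕ) : ℤ[X] := ∏ j ∈ Finset.range n, (1 - X ^ (j + 1))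


lemma kz_choose_poly (α β k : ℕ) : ∃ P : ℚ[X], P.natDegree ≤ 2 * k ∧
    ∀ B : ℕ, P.eval (B : ℚ) = ((α * B + β * B ^ 2).choose k : ℚ) := by
  refine ⟨C ((k.factorial : ℚ)⁻¹) * (descPochhammer ℚ k).comp (C (α : ℚ) * X + C (β : ℚ) * X ^ 2), ?_, ?_⟩
  · refine (natDegree_C_mul_le _ _).trans ?_
    refine natDegree_comp_le.trans ?_
    rw [descPochhammer_natDegree, mul_comm]
    refine Nat.mul_le_mul_right _ ?_
    compute_degree
  · intro B
    have h := descPochhammer_eval_eq_descFactorial ℚ (α * B + β * B ^ 2) k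
    have h2 := Nat.descFactorial_eq_factorial_mul_choose (α * B + β * B ^ 2) k
    have h3 : (k.factorial : ℚ) ≠ 0 := by exact_mod_cast k.factorial_ne_zero
    simp only [eval_mul, eval_C, eval_comp, eval_add, eval_X, eval_pow]
    push_cast at h
    rw [h, h2]
    push_cast
    field_simp

lemma kz_fd_int (α β k n : ℕ) (h : 2 * k < n) :
    ∑ B ∈ range (n + 1), ((-1 : ℤ) ^ (n - B) * n.choose B) * ((α * B + β * B ^ 2).choose k : ℤ) = 0 := by
  obtain ⟨P, hP, hB⟩ := kz_choose_poly α β k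
  have h1 := congrFun (Polynomial.fwdDiff_iter_eq_zero_of_degree_lt (lt_of_le_of_lt hP h)) 0
  rw [fwdDiff_iter_eq_sum_shift] at h1
  have h2 : ∀ B : ℕ, P.eval ((0 : ℚ) + B • 1) = ((α * B + β * B ^ 2).choose k : ℚ) := by
    intro B; rw [← hB]; simp
  simp only [h2] at h1
  have : ((∑ B ∈ range (n + 1), ((-1 : ℤ) ^ (n - B) * n.choose B) * ((α * B + β * B ^ 2).choose k : ℤ) : ℤ) : ℚ) = 0 := by
    push_cast
    simpa [zsmul_eq_mul] using h1
  exact_mod_cast this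

lemma kz_pow_expand {T : Type*} [CommRing T] (w : T) (M m : ℕ) (hw : (w - 1) ^ M = 0) :
    w ^ m = ∑ k ∈ range M, (m.choose k : T) * (w - 1) ^ k := by
  have h : w ^ m = ∑ k ∈ range (m + 1), (m.choose k : T) * (w - 1) ^ k := by
    conv_lhs => rw [← sub_add_cancel w 1, add_pow]
    refine sum_congr rfl fun k _ => ?_
    simp [mul_comm]
  rw [h]
  have e1 : ∑ k ∈ range (m + 1), (m.choose k : T) * (w - 1) ^ k
      = ∑ k ∈ range (m + 1 + M), (m.choose k : T) * (w - 1) ^ k := by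
    refine sum_subset (range_subset_range.2 (by omega)) ?_
    intro k _ hk
    rw [Nat.choose_eq_zero_of_lt (by simpa using hk)]; simp
  have e2 : ∑ k ∈ range M, (m.choose k : T) * (w - 1) ^ k
      = ∑ k ∈ range (m + 1 + M), (m.choose k : T) * (w - 1) ^ k := by
    refine sum_subset (range_subset_range.2 (by omega)) ?_
    intro k _ hk
    rw [pow_eq_zero_of_le (by simpa using hk) hw]; simp
  rw [e1, e2]

lemma kz_fd {T : Type*} [CommRing T] (w : T) (M α β : ℕ) (hw : (w - 1) ^ M = 0) :
    ∑ B ∈ range (2 * M + 1), ((-1 : T) ^ (2 * M - B) * (2 * M).choose B) *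
      w ^ (α * B + β * B ^ 2) = 0 := by
  simp_rw [kz_pow_expand w M _ hw, mul_sum]
  rw [sum_comm]
  refine sum_eq_zero fun k hk => ?_
  have h := kz_fd_int α β k (2 * M) (by have := mem_range.1 hk; omega)
  have h' := congrArg (fun t : ℤ => (t : T)) h
  push_cast at h'
  simp_rw [← mul_assoc]
  rw [← sum_mul, h', zero_mul]

/-- `(y;q)_n` in a commutative ring. -/
def kzP {T : Type*} [CommRing T] (q y : T) (n : ℕ) : T := ∏ j ∈ range n, (1 - y * q ^ j)

lemma kzP_add {T : Type*} [CommRing T] (q y : T) (m n : ℕ) :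
    kzP q y (m + n) = kzP q y m * kzP q (y * q ^ m) n := by
  unfold kzP
  rw [prod_range_add]
  congr 1
  refine prod_congr rfl fun j _ => ?_
  rw [pow_add]; ring

lemma kzP_mem {T : Type*} [CommRing T] (q x : T) (L a : ℕ) (hL : 0 < L) :
    kzP q (x * q ^ a) L ∈ Ideal.span {1 - x} ⊔ Ideal.span {1 - q ^ L} := by
  obtain ⟨j, hj, c, hc⟩ : ∃ j, j < L ∧ L ∣ a + j := by
    refine ⟨(L - a % L) % L, Nat.mod_lt _ hL, ?_⟩
    apply Nat.dvd_of_mod_eq_zero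
    rw [Nat.add_mod, Nat.mod_mod, ← Nat.add_mod]
    have h1 := Nat.mod_add_div a L
    have h2 := Nat.mod_lt a hL
    have : a + (L - a % L) = L * (a / L + 1) := by
      rw [mul_add]; omega
    rw [this]; simp
  unfold kzP
  refine Ideal.mem_of_dvd _ (dvd_prod_of_mem _ (mem_range.2 hj)) ?_
  have h1 : 1 - x * q ^ a * q ^ j = (1 - x) + x * (1 - (q ^ L) ^ c) := by
    rw [← pow_mul, ← hc, pow_add]; ring
  rw [h1]
  refine Submodule.add_mem_sup (Ideal.mem_span_singleton_self _) (Ideal.mul_mem_left _ _ ?_)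
  rw [Ideal.mem_span_singleton]
  exact one_sub_dvd_one_sub_pow _ _

lemma kzP_mem_pow {T : Type*} [CommRing T] (q x : T) (L : ℕ) (hL : 0 < L) (r a : ℕ) :
    kzP q (x * q ^ a) (L * r) ∈ (Ideal.span {1 - x} ⊔ Ideal.span {1 - q ^ L}) ^ r := by
  induction r generalizing a with
  | zero => simp
  | succ r ih =>
    rw [mul_add, mul_one, add_comm (L * r), kzP_add, pow_succ', mul_assoc x, ← pow_add]
    exact Ideal.mul_mem_mul (kzP_mem q x L a hL) (ih _)

lemma kzP_eq_zero {T : Type*} [CommRing T] (q x : T) (L e M : ℕ) (hL : 0 < L)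
    (hx : (1 - x) ^ e = 0) (hq : (1 - q ^ L) ^ M = 0) (a n : ℕ) (hn : L * (e + M) ≤ n) :
    kzP q (x * q ^ a) n = 0 := by
  obtain ⟨k, rfl⟩ := Nat.exists_eq_add_of_le hn
  rw [kzP_add]
  have h := Ideal.sup_pow_add_le_pow_sup_pow (kzP_mem_pow q x L hL (e + M) a)
  rw [Ideal.span_singleton_pow, Ideal.span_singleton_pow, hx, hq] at h
  have : kzP q (x * q ^ a) (L * (e + M)) = 0 := by simpa using h
  rw [this, zero_mul]

/-- truncated `∑ (y;q)_{n+1} y^n`. -/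
def kzG {T : Type*} [CommRing T] (q : T) (N : ℕ) (y : T) : T :=
  (1 - y) * ∑ n ∈ range N, kzP q (y * q) n * y ^ n

lemma kzG_step1 {T : Type*} [CommRing T] (q : T) (N : ℕ) (y : T) :
    kzG q N y = 1 - y ^ 2 * q * (∑ n ∈ range N, kzP q (y * q) n * (y * q) ^ n)
      - kzP q (y * q) N * y ^ N := by
  unfold kzG
  induction N with
  | zero => simp [kzP]
  | succ N ih =>
    rw [sum_range_succ, sum_range_succ, mul_add, ih]
    have : kzP q (y * q) (N + 1) = kzP q (y * q) N * (1 - y * q * q ^ N) := by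
      simp [kzP, prod_range_succ]
    rw [this]; ring

lemma kzG_step {T : Type*} [CommRing T] (q : T) (N : ℕ) (y : T)
    (h : ∀ n, N ≤ n → kzP q (y * q) n = 0) :
    kzG q (N + 1) y = 1 - y ^ 2 * q - y ^ 3 * q ^ 2 * kzG q (N + 1) (y * q) := by
  have h1 : ∀ n, kzP q (y * q) (n + 1) = (1 - y * q) * kzP q (y * q * q) n := by
    intro n
    rw [add_comm, kzP_add]; simp [kzP]
  have h2 : (1 - y * q) * kzP q (y * q * q) N = 0 := by rw [← h1, h _ (by omega)]
  rw [kzG_step1, h _ (by omega), sum_range_succ']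
  simp only [h1]
  unfold kzG
  rw [sum_range_succ, mul_add (1 - y * q), ← mul_assoc (1 - y * q) (kzP q (y * q * q) N), h2]
  rw [mul_sum]
  have : ∑ k ∈ range N, (1 - y * q) * kzP q (y * q * q) k * (y * q) ^ (k + 1)
    = (y * q) * ∑ i ∈ range N, (1 - y * q) * (kzP q (y * q * q) i * (y * q) ^ i) := by
    rw [mul_sum]; refine sum_congr rfl fun k _ => ?_
    ring
  rw [this]
  simp [kzP]; ring

lemma kz_pent (m : ℕ) : (m + 1) * (3 * (m + 1) + 1) / 2 = m * (3 * m + 1) / 2 + (3 * m + 2) ∧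
    (m + 1) * (3 * m + 2) / 2 = m * (3 * m + 1) / 2 + (2 * m + 1) := by
  constructor
  · rw [← Nat.add_mul_div_right _ _ (by norm_num : 0 < 2)]; congr 1; ring
  · rw [← Nat.add_mul_div_right _ _ (by norm_num : 0 < 2)]; congr 1; ring

lemma kzG_iter {T : Type*} [CommRing T] (q x : T) (N : ℕ)
    (h : ∀ a n, N ≤ n → kzP q (x * q ^ a) n = 0) (m : ℕ) :
    kzG q (N + 1) x = ∑ j ∈ range m, ((-1) ^ j * x ^ (3 * j) * q ^ (j * (3 * j + 1) / 2)
        - (-1) ^ j * x ^ (3 * j + 2) * q ^ ((j + 1) * (3 * j + 2) / 2))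
      + (-1) ^ m * x ^ (3 * m) * q ^ (m * (3 * m + 1) / 2) * kzG q (N + 1) (x * q ^ m) := by
  induction m with
  | zero => simp
  | succ m ih =>
    rw [ih, sum_range_succ, (kz_pent m).1, (kz_pent m).2, kzG_step q N (x * q ^ m)
      (by intro n hn; rw [mul_assoc, ← pow_succ]; exact h _ _ hn)]
    rw [mul_assoc x, ← pow_succ]
    generalize kzG q (N + 1) (x * q ^ (m + 1)) = g
    ring

lemma kz_root {T : Type*} [CommRing T] (y : T) (M : ℕ)
    (hY : ∏ j ∈ range M, (1 - y ^ (j + 1)) = 0) : (1 - y ^ M.factorial) ^ M = 0 := by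
  have : ∏ j ∈ range M, (1 - y ^ (j + 1)) ∣ ∏ j ∈ range M, (1 - y ^ M.factorial) := by
    refine prod_dvd_prod_of_dvd _ _ fun j hj => ?_
    obtain ⟨c, hc⟩ := Nat.dvd_factorial (Nat.succ_pos j) (mem_range.1 hj)
    rw [hc, pow_mul]
    exact one_sub_dvd_one_sub_pow _ _
  rw [hY] at this
  simpa using this

lemma kz_core {T : Type*} [CommRing T] (q x : T) (s M e : ℕ) (hs : 1 ≤ s) (π : T →+ T)
    (hπx : ∀ t, π (x * t) = x * π t) (hπq : ∀ t, π (q ^ s * t) = q ^ s * π t)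
    (hp1 : ∀ m : ℕ, π (q ^ (m * (3 * m + 1) / 2)) = 0)
    (hp2 : ∀ m : ℕ, π (q ^ ((m + 1) * (3 * m + 2) / 2)) = 0)
    (hY : ∏ j ∈ range M, (1 - (q ^ s) ^ (j + 1)) = 0) (hz : (1 - x) ^ e = 0) :
    ∃ N0, ∀ N, N0 ≤ N → (1 - x ^ (6 * (s * M.factorial))) ^ (2 * M) * π (kzG q (N + 1) x) = 0 := by
  set L := s * M.factorial with hLdef
  have hL : 0 < L := Nat.mul_pos hs (Nat.factorial_pos _)
  set w := q ^ L with hw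
  have hwM : (1 - w) ^ M = 0 := by
    have := kz_root _ _ hY
    rwa [← pow_mul] at this
  have hwM' : (w - 1) ^ M = 0 := by
    rw [← neg_sub, neg_pow, hwM, mul_zero]
  refine ⟨L * (e + M), fun N hN => ?_⟩
  have hzero : ∀ a n, N ≤ n → kzP q (x * q ^ a) n = 0 := fun a n hn =>
    kzP_eq_zero q x L e M hL hz hwM a n (hN.trans hn)
  have hπxk : ∀ k t, π (x ^ k * t) = x ^ k * π t := by
    intro k; induction k with
    | zero => simp
    | succ k ih => intro t; rw [pow_succ', mul_assoc, hπx, ih]; ring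
  have hπqk : ∀ k t, π ((q ^ s) ^ k * t) = (q ^ s) ^ k * π t := by
    intro k; induction k with
    | zero => simp
    | succ k ih => intro t; rw [pow_succ', mul_assoc, hπq, ih]; ring
  have hπw : ∀ k t, π (w ^ k * t) = w ^ k * π t := by
    intro k t
    have : w ^ k = (q ^ s) ^ (M.factorial * k) := by
      rw [hw, ← pow_mul, ← pow_mul, hLdef, mul_assoc]
    rw [this, hπqk]
  have hπs : ∀ k t, π ((-1) ^ k * t) = (-1) ^ k * π t := by
    intro k t
    rcases neg_one_pow_eq_or T k with h | h <;> simp [h]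
  -- the polynomial representing `kzG`
  let P : T[X] := (1 - C x * X) * ∑ n ∈ range (N + 1),
    (∏ j ∈ range n, (1 - C x * X * C q * C q ^ j)) * (C x * X) ^ n
  have hP : ∀ y, P.eval y = kzG q (N + 1) (x * y) := by
    intro y
    simp [P, kzG, kzP, eval_finsetSum, eval_prod]
  have key : ∀ B : ℕ, π (kzG q (N + 1) x) = x ^ (6 * L * B) *
      ∑ j ∈ range (P.natDegree + 1), π (P.coeff j) * w ^ ((2 * j + 1) * B + 6 * L * B ^ 2) := by
    intro B
    conv_lhs => rw [kzG_iter q x N hzero (2 * L * B)]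
    rw [map_add, map_sum, sum_eq_zero, zero_add]
    · have e1 : 2 * L * B * (3 * (2 * L * B) + 1) / 2 = L * (B + 6 * L * B ^ 2) := by
        apply Nat.div_eq_of_eq_mul_left (by norm_num); ring
      rw [e1, pow_mul q, ← hw, mul_assoc, mul_assoc, hπs, hπxk, hπw]
      have e2 : (-1 : T) ^ (2 * L * B) = 1 := by
        rw [mul_assoc, pow_mul]; simp
      have e3 : q ^ (2 * L * B) = w ^ (2 * B) := by
        rw [hw, ← pow_mul]; congr 1; ring
      rw [e2, one_mul, e3, ← hP, eval_eq_sum_range, map_sum, mul_sum]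
      congr 1
      · congr 1; ring
      · refine sum_congr rfl fun j _ => ?_
        rw [mul_comm (P.coeff j), ← pow_mul w, hπw, hw]; ring
    · intro j _
      rw [map_sub, mul_assoc, mul_assoc, hπs, hπs, hπxk, hπxk, hp1, hp2]; simp
  have e4 : (1 - x ^ (6 * L)) ^ (2 * M) = ∑ B ∈ range (2 * M + 1),
      ((-1 : T) ^ (2 * M - B) * (2 * M).choose B) * (x ^ (6 * L)) ^ (2 * M - B) := by
    rw [sub_eq_add_neg, add_pow]
    refine sum_congr rfl fun B _ => ?_
    rw [neg_pow]; ring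
  rw [e4, sum_mul]
  have e5 : ∀ B ∈ range (2 * M + 1), ((-1 : T) ^ (2 * M - B) * (2 * M).choose B) *
      (x ^ (6 * L)) ^ (2 * M - B) * π (kzG q (N + 1) x) =
      ∑ j ∈ range (P.natDegree + 1), x ^ (6 * L * (2 * M)) * π (P.coeff j) *
        (((-1 : T) ^ (2 * M - B) * (2 * M).choose B) *
        w ^ ((2 * j + 1) * B + 6 * L * B ^ 2)) := by
    intro B hB
    have hB' : B ≤ 2 * M := by have := mem_range.1 hB; omega
    conv_lhs => rw [key B]
    have : x ^ (6 * L * (2 * M)) = (x ^ (6 * L)) ^ (2 * M - B) * x ^ (6 * L * B) := by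
      rw [← pow_mul, ← pow_add, ← mul_add, Nat.sub_add_cancel hB']
    rw [this, mul_sum, mul_sum]
    refine sum_congr rfl fun j _ => ?_
    ring
  rw [sum_congr rfl e5, sum_comm]
  refine sum_eq_zero fun j _ => ?_
  rw [← mul_sum, kz_fd w M _ _ hwM', mul_zero]

lemma kz_core2 {T : Type*} [CommRing T] (q z : T) (s M : ℕ) (hs : 1 ≤ s) (π : T →+ T)
    (hπz : ∀ t, π (z * t) = z * π t) (hπq : ∀ t, π (q ^ s * t) = q ^ s * π t)
    (hp1 : ∀ m : ℕ, π (q ^ (m * (3 * m + 1) / 2)) = 0)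
    (hp2 : ∀ m : ℕ, π (q ^ ((m + 1) * (3 * m + 2) / 2)) = 0)
    (hY : ∏ j ∈ range M, (1 - (q ^ s) ^ (j + 1)) = 0) (hz : z ^ (2 * M + 2) = 0) :
    ∃ N0, ∀ N, N0 ≤ N → z ^ (2 * M + 1) * (6 * (s * M.factorial) : ℕ) ^ (2 * M) *
      π (∑ n ∈ range (N + 1), kzP q q n) = 0 := by
  obtain ⟨N0, h⟩ := kz_core q (1 - z) s M (2 * M + 2) hs π
    (fun t => by rw [sub_mul, map_sub, hπz]; ring_nf) hπq hp1 hp2 hY (by simpa using hz)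
  refine ⟨N0, fun N hN => ?_⟩
  have h := h N hN
  set D := 6 * (s * M.factorial)
  have gen : ∀ p : T[X], z ^ (2 * M + 1) * p.eval (1 - z) = z ^ (2 * M + 1) * p.eval 1 := by
    intro p
    obtain ⟨c, hc⟩ := sub_dvd_eval_sub (1 - z) 1 p
    rw [← sub_eq_zero, ← mul_sub, hc]
    linear_combination (-c) * hz
  have hπzk : ∀ k t, π (z ^ k * t) = z ^ k * π t := by
    intro k; induction k with
    | zero => simp
    | succ k ih => intro t; rw [pow_succ', mul_assoc, hπz, ih]; ring
  -- geometric sum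
  have h1 : 1 - (1 - z) ^ D = z * ∑ k ∈ range D, (1 - z) ^ k := by
    rw [← mul_neg_geom_sum]; ring
  have h2 : z ^ (2 * M + 1) * (∑ k ∈ range D, (1 - z) ^ k) ^ (2 * M) =
      z ^ (2 * M + 1) * (D : T) ^ (2 * M) := by
    have := gen ((∑ k ∈ range D, X ^ k) ^ (2 * M))
    simpa [eval_finsetSum] using this
  have h3 : z ^ (2 * M + 1) * (∑ n ∈ range (N + 1), kzP q ((1 - z) * q) n * (1 - z) ^ n) =
      z ^ (2 * M + 1) * ∑ n ∈ range (N + 1), kzP q q n := by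
    have := gen (∑ n ∈ range (N + 1), (∏ j ∈ range n, (1 - X * (C q * C q ^ j))) * X ^ n)
    simpa [eval_finsetSum, eval_prod, kzP, mul_assoc] using this
  have h4 : kzG q (N + 1) (1 - z) =
      z * (∑ n ∈ range (N + 1), kzP q ((1 - z) * q) n * (1 - z) ^ n) := by
    unfold kzG; ring
  rw [h4, hπz, h1] at h
  generalize (∑ n ∈ range (N + 1), kzP q ((1 - z) * q) n * (1 - z) ^ n) = S at *
  generalize (∑ n ∈ range (N + 1), kzP q q n) = F at *
  have h5 : z ^ (2 * M + 1) * π S = z ^ (2 * M + 1) * π F := by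
    rw [← hπzk, h3, hπzk]
  calc _ = (D : T) ^ (2 * M) * (z ^ (2 * M + 1) * π F) := by ring
    _ = (z ^ (2 * M + 1) * (D : T) ^ (2 * M)) * π S := by rw [← h5]; ring
    _ = 0 := by rw [← h2, ← h]; ring

/-- The part of a polynomial supported on exponents congruent to `i` mod `s`. -/
noncomputable def kzComp (R : Type*) [CommRing R] (s i : ℕ) : R[X] →ₗ[R] R[X] :=
  Polynomial.lsum (fun n => if n % s = i then monomial n else 0)

lemma kzComp_monomial (R : Type*) [CommRing R] (s i n : ℕ) (a : R) :
    kzComp R s i (monomial n a) = if n % s = i then monomial n a else 0 := by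
  unfold kzComp
  rw [Polynomial.lsum_apply, sum_monomial_index]
  · split_ifs <;> simp
  · simp

lemma kzComp_X_pow (R : Type*) [CommRing R] (s i n : ℕ) :
    kzComp R s i (X ^ n) = if n % s = i then X ^ n else 0 := by
  rw [X_pow_eq_monomial, kzComp_monomial]

lemma kzComp_expand (R : Type*) [CommRing R] (s i : ℕ) (f g : R[X]) :
    kzComp R s i (expand R s f * g) = expand R s f * kzComp R s i g := by
  induction f using Polynomial.induction_on' with
  | add p q hp hq => rw [map_add, add_mul, add_mul, map_add, hp, hq]
  | monomial n a =>
    induction g using Polynomial.induction_on' with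
    | add p q hp hq => rw [mul_add, map_add, map_add, mul_add, hp, hq]
    | monomial m b =>
      rw [expand_monomial, monomial_mul_monomial, kzComp_monomial, kzComp_monomial]
      simp only [Nat.mul_add_mod_self_right]
      split_ifs
      · rw [monomial_mul_monomial]
      · simp

lemma kzComp_map {R S : Type*} [CommRing R] [CommRing S] (φ : R →+* S) (s i : ℕ) (f : R[X]) :
    kzComp S s i (f.map φ) = (kzComp R s i f).map φ := by
  induction f using Polynomial.induction_on' with
  | add p q hp hq => rw [Polynomial.map_add, map_add, map_add, Polynomial.map_add, hp, hq]
  | monomial n a =>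
    rw [map_monomial, kzComp_monomial, kzComp_monomial]
    split_ifs <;> simp

/-- The component map on the quotient. -/
lemma kz_quot (R : Type*) [CommRing R] (s i : ℕ) (Y : R[X]) :
    ∃ π : (R[X] ⧸ Ideal.span {expand R s Y}) →+ (R[X] ⧸ Ideal.span {expand R s Y}),
      ∀ f, π (Ideal.Quotient.mk _ f) = Ideal.Quotient.mk _ (kzComp R s i f) := by
  set I := Ideal.span {expand R s Y}
  let q : R[X] →+ R[X] ⧸ I := (Ideal.Quotient.mk I : R[X] →+ R[X] ⧸ I)
  have hk : ∀ a b, Ideal.Quotient.mk I a = Ideal.Quotient.mk I b →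
      Ideal.Quotient.mk I (kzComp R s i a) = Ideal.Quotient.mk I (kzComp R s i b) := by
    intro a b h
    rw [Ideal.Quotient.eq, Ideal.mem_span_singleton] at h ⊢
    obtain ⟨c, hc⟩ := h
    rw [← map_sub, hc, kzComp_expand]
    exact dvd_mul_right _ _
  choose σ hσ using (Ideal.Quotient.mk_surjective (I := I))
  refine ⟨AddMonoidHom.mk' (fun t => Ideal.Quotient.mk I (kzComp R s i (σ t))) ?_, ?_⟩
  · intro a b
    rw [← map_add, ← map_add]
    apply hk
    rw [map_add, hσ, hσ, hσ]
  · intro f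
    exact hk _ _ (hσ _)

lemma qPoch_map_expand (R : Type*) [CommRing R] (s n : ℕ) :
    expand R s ((qPoch n).map (Int.castRingHom R)) =
      ∏ j ∈ range n, (1 - (X ^ s) ^ (j + 1)) := by
  simp [qPoch, Polynomial.map_prod, map_prod]

lemma kzP_X (R : Type*) [CommRing R] (n : ℕ) :
    kzP (X : R[X]) X n = (qPoch n).map (Int.castRingHom R) := by
  simp [qPoch, kzP, Polynomial.map_prod, pow_succ']

lemma qPoch_monic (n : ℕ) : ((-1) ^ n * qPoch n).Monic := by
  have : (-1) ^ n * qPoch n = ∏ j ∈ range n, (X ^ (j + 1) - 1 : ℤ[X]) := by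
    unfold qPoch
    rw [← card_range n, ← prod_const, card_range, ← prod_mul_distrib]
    refine prod_congr rfl fun j _ => by ring
  rw [this]
  refine monic_prod_of_monic _ _ fun j _ => ?_
  simpa using monic_X_pow_sub_C (1 : ℤ) (Nat.succ_ne_zero j)

lemma kz_exists (e : ℕ) : ∃ (R : Type) (_ : CommRing R) (z : R), z ^ (e + 1) = 0 ∧
    ∀ c : ℤ, z ^ e * (c : R) = 0 → c = 0 := by
  refine ⟨ℤ[X] ⧸ Ideal.span {(X : ℤ[X]) ^ (e + 1)}, inferInstance,
    Ideal.Quotient.mk _ X, ?_, ?_⟩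
  · rw [← map_pow, Ideal.Quotient.eq_zero_iff_mem]
    exact Ideal.mem_span_singleton_self _
  · intro c hc
    rw [← map_intCast (Ideal.Quotient.mk (Ideal.span {(X : ℤ[X]) ^ (e + 1)})), ← map_pow, ← map_mul,
      Ideal.Quotient.eq_zero_iff_mem, Ideal.mem_span_singleton, X_pow_dvd_iff] at hc
    have := hc e (by omega)
    rw [← C_eq_intCast] at this
    simpa [coeff_X_pow] using this

lemma kz_large (s M i : ℕ) (hs : 1 ≤ s)
    (hp1 : ∀ m : ℕ, (m * (3 * m + 1) / 2) % s ≠ i)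
    (hp2 : ∀ m : ℕ, ((m + 1) * (3 * m + 2) / 2) % s ≠ i) :
    ∃ N0, ∀ N, N0 ≤ N →
      expand ℤ s (qPoch M) ∣ kzComp ℤ s i (∑ n ∈ range (N + 1), qPoch n) := by
  obtain ⟨R, _, z, hz, hzc⟩ := kz_exists (2 * M + 1)
  obtain ⟨I, hI⟩ : ∃ I : Ideal R[X],
    I = Ideal.span {expand R s ((qPoch M).map (Int.castRingHom R))} := ⟨_, rfl⟩
  obtain ⟨π, hπ⟩ : ∃ π : (R[X] ⧸ I) →+ (R[X] ⧸ I),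
      ∀ f, π (Ideal.Quotient.mk I f) = Ideal.Quotient.mk I (kzComp R s i f) := by
    subst hI; exact kz_quot R s i _
  obtain ⟨N0, h⟩ := kz_core2 (Ideal.Quotient.mk I X) (Ideal.Quotient.mk I (C z)) s M hs π
    (by
      intro t
      obtain ⟨f, rfl⟩ := Ideal.Quotient.mk_surjective t
      rw [← map_mul, hπ, hπ, ← map_mul, ← smul_eq_C_mul, ← smul_eq_C_mul, map_smul])
    (by
      intro t
      obtain ⟨f, rfl⟩ := Ideal.Quotient.mk_surjective t
      rw [← map_pow, ← map_mul, hπ, hπ, ← map_mul]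
      have := kzComp_expand R s i X f
      rw [expand_X] at this
      rw [this])
    (by intro m; rw [← map_pow, hπ, kzComp_X_pow, if_neg (hp1 m), map_zero])
    (by intro m; rw [← map_pow, hπ, kzComp_X_pow, if_neg (hp2 m), map_zero])
    (by
      have : Ideal.Quotient.mk I (expand R s ((qPoch M).map (Int.castRingHom R))) = 0 :=
        Ideal.Quotient.eq_zero_iff_mem.2 (by rw [hI]; exact Ideal.mem_span_singleton_self _)
      rw [qPoch_map_expand] at this
      simpa using this)
    (by rw [← map_pow, ← C_pow, hz, C_0, map_zero])
  refine ⟨N0, fun N hN => ?_⟩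
  have h := h N hN
  have hF : ∑ n ∈ range (N + 1), kzP (Ideal.Quotient.mk I X) (Ideal.Quotient.mk I X) n =
      Ideal.Quotient.mk I ((∑ n ∈ range (N + 1), qPoch n).map (Int.castRingHom R)) := by
    rw [Polynomial.map_sum, map_sum]
    refine sum_congr rfl fun n _ => ?_
    rw [← kzP_X]; simp [kzP]
  set D := 6 * (s * M.factorial) with hD
  have hD0 : D ≠ 0 := by
    have := M.factorial_pos
    positivity
  rw [hF, hπ, kzComp_map] at h
  set g := kzComp ℤ s i (∑ n ∈ range (N + 1), qPoch n) with hg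
  have h1 : Ideal.Quotient.mk I (C (z ^ (2 * M + 1) * (D : R) ^ (2 * M)) * g.map (Int.castRingHom R)) = 0 := by
    rw [← h]
    simp
  rw [Ideal.Quotient.eq_zero_iff_mem, hI, Ideal.mem_span_singleton, ← map_expand] at h1
  set Y := expand ℤ s (qPoch M) with hY
  have hYm : ((-1) ^ M * Y).Monic := by
    have := (qPoch_monic M).expand (p := s) hs
    simpa using this
  have hYm' := hYm.map (Int.castRingHom R)
  have hunit : IsUnit ((-1 : ℤ[X]) ^ M) := (isUnit_neg_one).pow M
  have h2 : ((-1) ^ M * Y).map (Int.castRingHom R) ∣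
      C (z ^ (2 * M + 1) * (D : R) ^ (2 * M)) * g.map (Int.castRingHom R) := by
    rw [Polynomial.map_mul, ← coe_mapRingHom, (hunit.map (mapRingHom (Int.castRingHom R))).mul_left_dvd]
    exact h1
  rw [← modByMonic_eq_zero_iff_dvd hYm', ← smul_eq_C_mul, smul_modByMonic,
    ← map_modByMonic _ hYm] at h2
  have h3 : g %ₘ ((-1) ^ M * Y) = 0 := by
    ext k
    have := congrArg (fun p => coeff p k) h2
    simp only [coeff_smul, coeff_map, coeff_zero, smul_eq_mul] at this
    have h4 := hzc ((D : ℤ) ^ (2 * M) * (g %ₘ ((-1) ^ M * Y)).coeff k) (by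
      push_cast
      rw [← mul_assoc]
      simpa using this)
    rw [coeff_zero]
    exact (mul_eq_zero.1 h4).resolve_left (pow_ne_zero _ (by exact_mod_cast hD0))
  rw [modByMonic_eq_zero_iff_dvd hYm, hunit.mul_left_dvd] at h3
  exact h3

lemma qPoch_dvd (s M n : ℕ) (hs : 1 ≤ s) (h : s * M ≤ n) : expand ℤ s (qPoch M) ∣ qPoch n := by
  have h1 : expand ℤ s (qPoch M) = ∏ j ∈ (range M).image (fun j => s * (j + 1) - 1),
      (1 - X ^ (j + 1) : ℤ[X]) := by
    rw [prod_image]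
    · simp only [qPoch, map_prod, map_sub, map_one, map_pow, expand_X]
      refine prod_congr rfl fun j _ => ?_
      have : 0 < s * (j + 1) := by positivity
      rw [Nat.sub_add_cancel this, pow_mul]
    · intro a _ b _ hab
      have h1 : 0 < s * (a + 1) := by positivity
      have h2 : 0 < s * (b + 1) := by positivity
      have : s * (a + 1) = s * (b + 1) := by simp only at hab; omega
      have := Nat.eq_of_mul_eq_mul_left hs this
      omega
  rw [h1]
  unfold qPoch
  apply prod_dvd_prod_of_subset
  intro k hk
  obtain ⟨j, hj, rfl⟩ := mem_image.1 hk
  have h2 : 0 < s * (j + 1) := by positivity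
  have h3 : s * (j + 1) ≤ s * M := Nat.mul_le_mul_left _ (mem_range.1 hj)
  rw [mem_range]; omega

theorem kontsevich_zagier_dissection_divisibility
    (s N : ℕ) (hs : 1 ≤ s) (hN : 1 ≤ N) (i : ℕ) (hi : i < s)
    (hpent : ¬ ∃ m : ℤ, (m * (3 * m + 1)) / 2 ≡ (i : ℤ) [ZMOD (s : ℤ)])
    (A : ℕ → ℤ[X])
    (hdiss : ∑ n ∈ Finset.range (N + 1), qPoch n =
      ∑ j ∈ Finset.range s, X ^ j * (A j).comp (X ^ s)) :
    qPoch ((N + 1) / s) ∣ A i := by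
  set M := (N + 1) / s with hM
  have hMN : s * M ≤ N + 1 := Nat.mul_div_le _ _
  obtain ⟨N0, h0⟩ := kz_large s M i hs
    (by
      intro m hm
      refine hpent ⟨m, ?_⟩
      have : ((m * (3 * m + 1) / 2 : ℕ) : ℤ) ≡ (i : ℤ) [ZMOD (s : ℤ)] := by
        rw [Int.natCast_modEq_iff, ← hm]; exact (Nat.mod_modEq _ _).symm
      simpa using this)
    (by
      intro m hm
      refine hpent ⟨-(m + 1), ?_⟩
      have : (((m + 1) * (3 * m + 2) / 2 : ℕ) : ℤ) ≡ (i : ℤ) [ZMOD (s : ℤ)] := by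
        rw [Int.natCast_modEq_iff, ← hm]; exact (Nat.mod_modEq _ _).symm
      have e : (-((m : ℤ) + 1) * (3 * -((m : ℤ) + 1) + 1)) / 2 =
          (((m + 1) * (3 * m + 2) / 2 : ℕ) : ℤ) := by
        push_cast; congr 1
      rw [e]; exact this)
  have h1 := h0 (N0 + N) (by omega)
  -- pass from the long sum to the short one
  have h2 : expand ℤ s (qPoch M) ∣ kzComp ℤ s i (∑ n ∈ range (N + 1), qPoch n) := by
    have e : N0 + N + 1 = (N + 1) + N0 := by omega
    rw [e, sum_range_add, map_add] at h1
    refine (dvd_add_left ?_).1 h1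
    have : expand ℤ s (qPoch M) ∣ ∑ x ∈ range N0, qPoch (N + 1 + x) :=
      dvd_sum fun x _ => qPoch_dvd s M _ hs (by omega)
    obtain ⟨c, hc⟩ := this
    rw [hc, kzComp_expand]
    exact dvd_mul_right _ _
  have h3 : kzComp ℤ s i (∑ n ∈ range (N + 1), qPoch n) = expand ℤ s (A i) * X ^ i := by
    rw [hdiss, map_sum, sum_eq_single i]
    · rw [← expand_eq_comp_X_pow, mul_comm, kzComp_expand, kzComp_X_pow,
        if_pos (Nat.mod_eq_of_lt hi)]
    · intro j hj hji
      rw [← expand_eq_comp_X_pow, mul_comm, kzComp_expand, kzComp_X_pow,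
        if_neg (by rwa [Nat.mod_eq_of_lt (mem_range.1 hj)]), mul_zero]
    · intro h; exact absurd (mem_range.2 hi) h
  rw [h3] at h2
  have hcop : IsCoprime (expand ℤ s (qPoch M)) (X ^ i) := by
    apply IsCoprime.pow_right
    rw [qPoch, map_prod]
    refine IsCoprime.prod_left fun j _ => ?_
    have : 0 < s * (j + 1) := by positivity
    refine ⟨1, X ^ (s * (j + 1) - 1), ?_⟩
    rw [← pow_succ, Nat.sub_add_cancel this]
    simp [pow_mul]
  obtain ⟨c, hc⟩ := hcop.dvd_of_dvd_mul_right h2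
  refine ⟨contract s c, ?_⟩
  have h4 := congrArg (contract s) hc
  rw [contract_expand, mul_comm, contract_mul_expand] at h4
  · rw [h4, mul_comm]
  all_goals omega
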